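/- Let G be a finite group, H a subgroup of G of index n ≥ 2, F a field of characteristic p > 0, and V an H-module of finite dimension over F. Let K := core_G(H), and let χ be the number of orbits of K on the nonzero elements of V (assumed finite). If K is soluble and n_p > 1, then for every submodule S of the induced module V↑G = F[G] ⊗_{F[H]} V, d_G(S) ≤ χ·⌊b·n/√(log_p n_p)⌋, where b := √(2/π). -/

import Mathlib

/-- `dMod G S` is `d_G(S)`: the minimal number of elements required to generate the
(`G`-stable) submodule `S` as a `G`-module. -/
noncomputable def dMod (G : Type*) [Group G] {F W : Type*} [Field F] [AddCommGroup W]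
    [Module F W] [DistribMulAction G W] (S : Submodule F W) : ℕ :=
  sInf {m : ℕ | ∃ T : Finset W, T.card = m ∧ (T : Set W) ⊆ (S : Set W) ∧
    Submodule.span F {w : W | ∃ g : G, ∃ t ∈ T, w = g • t} = S}

/-!
Suppose that `W` is spanned by components `φ x` permuted transitively by `G`, indexed by a finite
ordered set with a transversal `r x • ω₀ = x`. An element of `S` has a leading term `r x • u` with
`u ∈ φ ω₀`, and it is enough to generate all leading terms of `S`. Up to the kernel `K` of the
permutation action only `χ` vectors `u ≠ 0` matter. If the element `r y * (r x)⁻¹` moves everything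
below `x` below `y`, it turns a leading term `r x • u` into a leading term `r y • u`; so for each
`u` only the positions `x` that are minimal for this relation need a generator, and they form an
antichain.

The order and the transversal come from a Sylow `p`-subgroup `P`. Its orbits have length `p ^ k`
with `k ≥ log_p n_p`, and a chain of subgroups, each normal of index `p` in the previous one, labels
the points of an orbit by `k` digits in such a way that, for the lexicographic order, coordinatewise
comparison implies the relation above. An antichain therefore meets each orbit in an antichain of
the grid `{0, …, p - 1} ^ k`, which by Sperner's theorem and Wallis' product has at most
`√(2 / π) * p ^ k / √k` elements.
-/

/-! ### Antichains in grids -/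

open Finset in
theorem card_le_choose_of_isAntichain_pairs {ι α : Type*} [Fintype ι] [PartialOrder α]
    {lo hi : ι → α} (hle : lo ≤ hi) {A : Finset (ι → α)}
    (hA : IsAntichain (· ≤ ·) (A : Set (ι → α))) (hmem : ∀ a ∈ A, ∀ i, a i = lo i ∨ a i = hi i) :
    #A ≤ (Fintype.card ι).choose (Fintype.card ι / 2) := by
  classical
  let upper (a : ι → α) : Finset ι := {i | a i = hi i}
  have le_of_upper : ∀ a ∈ A, ∀ b ∈ A, upper a ⊆ upper b → a ≤ b := by
    intro a ha b hb hab i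
    rcases hmem a ha i with h | h
    · rcases hmem b hb i with h' | h' <;> rw [h, h']
      exact hle i
    · have : i ∈ upper b := hab (by simpa [upper] using h)
      rw [h, ← (mem_filter.1 this).2]
  have upper_injOn : Set.InjOn upper A := fun a ha b hb hab ↦
    le_antisymm (le_of_upper a ha b hb hab.subset) (le_of_upper b hb a ha hab.superset)
  rw [← card_image_of_injOn upper_injOn]
  refine IsAntichain.sperner ?_
  rw [coe_image]
  rintro _ ⟨a, ha, rfl⟩ _ ⟨b, hb, rfl⟩ hne hab
  exact hne (congrArg upper (hA.eq ha hb (le_of_upper a ha b hb hab)))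

-- Double counting: every point lies in `2 ^ |ι|` of the cubes `∏ i, {c i, c i + 1}` (cyclically),
-- and Sperner's theorem bounds the size of an antichain inside each of the `p ^ |ι|` cubes.
open Finset in
theorem card_antichain_mul_two_pow_le {ι : Type*} [Fintype ι] {p : ℕ} (hp : 2 ≤ p)
    {A : Finset (ι → Fin p)} (hA : IsAntichain (· ≤ ·) (A : Set (ι → Fin p))) :
    #A * 2 ^ Fintype.card ι ≤
      p ^ Fintype.card ι * (Fintype.card ι).choose (Fintype.card ι / 2) := by
  classical
  obtain ⟨p, rfl⟩ := Nat.exists_eq_add_of_le' hp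
  let InCube (a c : ι → Fin (p + 2)) : Prop := ∀ i, a i = c i ∨ a i = c i + 1
  have card_cubes (a : ι → Fin (p + 2)) :
      2 ^ Fintype.card ι ≤ #(bipartiteAbove InCube univ a) := by
    have : bipartiteAbove InCube univ a = Fintype.piFinset fun i ↦ {a i, a i - 1} := by
      ext c
      simp [InCube, bipartiteAbove, eq_sub_iff_add_eq, eq_comm]
    have card_pair (i : ι) : #{a i, a i - 1} = 2 :=
      Finset.card_pair (Ne.symm (sub_eq_self.not.2 one_ne_zero))
    simp [this, Fintype.card_piFinset, card_pair]
  have card_inter_cube (c : ι → Fin (p + 2)) :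
      #(bipartiteBelow InCube A c) ≤ (Fintype.card ι).choose (Fintype.card ι / 2) := by
    refine card_le_choose_of_isAntichain_pairs (lo := c ⊓ (c + 1)) (hi := c ⊔ (c + 1)) inf_le_sup
      (hA.subset (filter_subset _ _)) fun a ha i ↦ ?_
    have := (mem_filter.1 ha).2 i
    rcases le_total (c i) (c i + 1) with h | h <;> simp [h] <;> tauto
  simpa using card_mul_le_card_mul InCube (fun a _ ↦ card_cubes a)
    (fun c (_ : c ∈ univ) ↦ card_inter_cube c)

theorem wallis_eq_sixteen_pow_div (n : ℕ) :
    Real.Wallis.W n = 16 ^ n / ((n.centralBinom : ℝ) ^ 2 * (2 * n + 1)) := by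
  have h : ((2 * n).factorial : ℝ) = n.centralBinom * (n.factorial * n.factorial) := by
    have := Nat.choose_mul_factorial_mul_factorial (n := 2 * n) (k := n) (by lia)
    rw [two_mul, Nat.add_sub_cancel, ← two_mul, mul_assoc] at this
    exact_mod_cast this.symm
  have hn : (n.factorial : ℝ) ≠ 0 := by exact_mod_cast n.factorial_ne_zero
  have hb : (n.centralBinom : ℝ) ≠ 0 := by exact_mod_cast n.centralBinom_ne_zero
  rw [Real.Wallis.W_eq_factorial_ratio, h, pow_mul]
  norm_num
  field_simp

theorem pi_mul_centralBinom_sq_le (n : ℕ) : Real.pi * n * (n.centralBinom : ℝ) ^ 2 ≤ 16 ^ n := by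
  have hb : (0 : ℝ) < n.centralBinom := by exact_mod_cast n.centralBinom_pos
  have wallis := Real.Wallis.le_W n
  rw [wallis_eq_sixteen_pow_div, le_div_iff₀ (by positivity)] at wallis
  have hn : (n : ℝ) ≤ (2 * n + 1) / (2 * n + 2) * (1 / 2) * (2 * n + 1) := by
    field_simp
    linarith
  calc Real.pi * n * (n.centralBinom : ℝ) ^ 2
      ≤ Real.pi * ((2 * n + 1) / (2 * n + 2) * (1 / 2) * (2 * n + 1)) *
        (n.centralBinom : ℝ) ^ 2 := by gcongr
    _ = (2 * n + 1) / (2 * n + 2) * (Real.pi / 2) * ((n.centralBinom : ℝ) ^ 2 * (2 * n + 1)) := by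
        ring
    _ ≤ 16 ^ n := wallis

theorem centralBinom_succ_eq_two_mul_choose (n : ℕ) :
    (n + 1).centralBinom = 2 * (2 * n + 1).choose n := by
  rw [Nat.centralBinom, mul_add_one, Nat.choose_succ_succ, Nat.succ_eq_add_one,
    Nat.choose_symm_half, ← two_mul]

theorem pi_mul_choose_half_sq_le (n : ℕ) :
    Real.pi * n * (n.choose (n / 2) : ℝ) ^ 2 ≤ 2 * 4 ^ n := by
  obtain ⟨m, rfl | rfl⟩ := Nat.even_or_odd' n
  · have := pi_mul_centralBinom_sq_le m
    rw [Nat.mul_div_cancel_left m two_pos, ← Nat.centralBinom_eq_two_mul_choose, pow_mul]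
    push_cast
    norm_num
    linarith
  · have := pi_mul_centralBinom_sq_le (m + 1)
    rw [centralBinom_succ_eq_two_mul_choose] at this
    rw [Nat.mul_add_div two_pos, Nat.div_eq_of_lt one_lt_two, add_zero]
    have four_pow : (4 : ℝ) ^ (2 * m + 1) = 4 * 16 ^ m := by rw [pow_succ', pow_mul]; norm_num
    rw [four_pow]
    push_cast at this ⊢
    rw [pow_succ' 16, mul_pow] at this
    nlinarith [mul_nonneg Real.pi_pos.le (sq_nonneg ((2 * m + 1).choose m : ℝ))]

theorem choose_half_mul_sqrt_le (n : ℕ) :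
    (n.choose (n / 2) : ℝ) * √n ≤ √(2 / Real.pi) * 2 ^ n := by
  refine (pow_le_pow_iff_left₀ (by positivity) (by positivity) two_ne_zero).1 ?_
  rw [mul_pow, mul_pow, Real.sq_sqrt (by positivity), Real.sq_sqrt (by positivity), ← pow_mul,
    mul_comm n, pow_mul, div_mul_eq_mul_div, le_div_iff₀ Real.pi_pos]
  norm_num
  linarith [pi_mul_choose_half_sq_le n]

open Finset in
theorem card_antichain_mul_sqrt_le {ι : Type*} [Fintype ι] {p : ℕ} (hp : 2 ≤ p)
    {A : Finset (ι → Fin p)} (hA : IsAntichain (· ≤ ·) (A : Set (ι → Fin p))) :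
    #A * √(Fintype.card ι) ≤ √(2 / Real.pi) * p ^ Fintype.card ι := by
  set k := Fintype.card ι
  have double_count : (#A * 2 ^ k : ℝ) ≤ p ^ k * k.choose (k / 2) := by
    exact_mod_cast card_antichain_mul_two_pow_le hp hA
  refine le_of_mul_le_mul_right ?_ (by positivity : (0 : ℝ) < 2 ^ k)
  calc #A * √k * 2 ^ k = #A * 2 ^ k * √k := by ring
    _ ≤ p ^ k * k.choose (k / 2) * √k := by gcongr
    _ = p ^ k * (k.choose (k / 2) * √k) := by ring
    _ ≤ p ^ k * (√(2 / Real.pi) * 2 ^ k) := by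
        gcongr ?_ * ?_
        exact choose_half_mul_sqrt_le k
    _ = √(2 / Real.pi) * p ^ k * 2 ^ k := by ring

/-! ### Order theory -/

theorem le_of_inf_sup_iSup_lt_le {α Ω : Type*} [CompleteLattice α] [IsModularLattice α]
    [IsCompactlyGenerated α] [LinearOrder Ω] [WellFoundedLT Ω] {φ : Ω → α} {s t : α}
    (hts : t ≤ s) (hs : s ≤ iSup φ)
    (h : ∀ x, φ x ⊓ (s ⊔ ⨆ z < x, φ z) ≤ t ⊔ ⨆ z < x, φ z) : s ≤ t := by
  let upTo (x : Ω) : α := ⨆ z ≤ x, φ z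
  have upTo_mono : Monotone upTo := fun x y hxy ↦ biSup_mono fun z hz ↦ hz.trans hxy
  have le_upTo (x : Ω) : φ x ≤ upTo x := le_iSup₂_of_le x le_rfl le_rfl
  have inf_upTo_le (x : Ω) : s ⊓ upTo x ≤ t := by
    induction x using WellFoundedLT.induction with
    | ind x ih =>
      set b := ⨆ z < x, φ z
      have upTo_le : upTo x ≤ b ⊔ φ x := iSup₂_le fun z hz ↦ hz.lt_or_eq.elim
        (fun hlt ↦ le_sup_of_le_left (le_iSup₂_of_le z hlt le_rfl))
        (fun heq ↦ heq ▸ le_sup_right)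
      have inf_b_le : b ⊓ s ≤ t := by
        have b_le : b ≤ ⨆ z : Set.Iio x, upTo z :=
          iSup₂_le fun z hz ↦ le_iSup_of_le (⟨z, hz⟩ : Set.Iio x) (le_upTo z)
        calc b ⊓ s ≤ s ⊓ ⨆ z : Set.Iio x, upTo z := by rw [inf_comm]; gcongr
          _ = ⨆ z : Set.Iio x, s ⊓ upTo z :=
              (upTo_mono.comp (Subtype.mono_coe _)).directed_le.inf_iSup_eq
          _ ≤ t := iSup_le fun z ↦ ih z z.2
      have inf_le_sup : (b ⊔ φ x) ⊓ (s ⊔ b) ≤ t ⊔ b := by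
        rw [sup_inf_assoc_of_le _ le_sup_right]
        exact sup_le le_sup_right (h x)
      calc s ⊓ upTo x ≤ (b ⊔ φ x) ⊓ (s ⊔ b) ⊓ s := le_inf
            (le_inf (inf_le_right.trans upTo_le) (inf_le_left.trans le_sup_left)) inf_le_left
        _ ≤ (t ⊔ b) ⊓ s := by gcongr
        _ = t ⊔ b ⊓ s := sup_inf_assoc_of_le _ hts
        _ ≤ t := sup_le le_rfl inf_b_le
  calc s = s ⊓ ⨆ x, upTo x := (inf_eq_left.2 (hs.trans (iSup_mono le_upTo))).symm
    _ = ⨆ x, s ⊓ upTo x := upTo_mono.directed_le.inf_iSup_eq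
    _ ≤ t := iSup_le inf_upTo_le

open Finset in
theorem exists_antichain_forall_rel {α : Type*} [Finite α] (r : α → α → Prop) [Std.Refl r]
    [IsTrans α r] [Std.Antisymm r] (s : Set α) :
    ∃ t : Finset α, ↑t ⊆ s ∧ IsAntichain r (t : Set α) ∧ ∀ x ∈ s, ∃ y ∈ t, r y x := by
  let _ : PartialOrder α :=
    { le := r, le_refl := refl, le_trans _ _ _ := _root_.trans, le_antisymm _ _ := antisymm }
  have hfin : {x | Minimal (· ∈ s) x}.Finite := Set.toFinite _
  refine ⟨hfin.toFinset, fun x hx ↦ (hfin.mem_toFinset.1 hx).1, ?_, fun x hx ↦ ?_⟩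
  · rw [hfin.coe_toFinset]
    exact setOfPred_minimal_antichain _
  · obtain ⟨y, hyx, hy⟩ := (Set.toFinite s).exists_le_minimal hx
    exact ⟨y, hfin.mem_toFinset.2 hy, hyx⟩

/-! ### Lexicographic charts of orbits of `p`-groups -/

theorem exists_normal_index_eq_of_isPGroup {P : Type*} [Group P] [Finite P] {p : ℕ}
    [hp : Fact p.Prime] (hP : IsPGroup p P) {S : Subgroup P} (hS : S ≠ ⊤) :
    ∃ N : Subgroup P, S ≤ N ∧ N.Normal ∧ N.index = p := by
  obtain ⟨n, hn⟩ := IsPGroup.iff_card.1 hP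
  obtain ⟨s, hs⟩ := IsPGroup.iff_card.1 (hP.to_subgroup S)
  have hsn : s < n := by
    have : Nat.card S < Nat.card P := lt_of_le_of_ne (Subgroup.card_le_card_group S)
      (mt (Subgroup.card_eq_iff_eq_top S).1 hS)
    rwa [hs, hn, Nat.pow_lt_pow_iff_right hp.out.one_lt] at this
  obtain ⟨m, rfl⟩ := Nat.exists_eq_add_of_lt hsn
  obtain ⟨N, hN, hSN⟩ := Sylow.exists_subgroup_card_pow_prime_le p (m := s + m)
    (hn ▸ pow_dvd_pow p (Nat.le_succ _)) S hs (Nat.le_add_right s m)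
  have hidx : N.index = p := by
    have := N.card_mul_index
    rw [hN, hn, pow_succ] at this
    exact Nat.eq_of_mul_eq_mul_left (pow_pos hp.out.pos _) this
  refine ⟨N, hSN, Subgroup.normal_of_index_eq_minFac_card ?_, hidx⟩
  rw [hidx, hn, hp.out.pow_minFac (Nat.succ_ne_zero _)]

theorem orderOf_mk_eq_of_index_eq_prime {P : Type*} [Group P] {N : Subgroup P} [N.Normal] {p : ℕ}
    [Fact p.Prime] (hidx : N.index = p) {t : P} (ht : t ∉ N) : orderOf (t : P ⧸ N) = p :=
  orderOf_eq_prime (by rw [← hidx]; exact pow_card_eq_one')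
    (mt (QuotientGroup.eq_one_iff t).1 ht)

/-- A parametrisation of the orbit of `x₀` under `P` by strings of `k` digits in base `p`, through
group elements `elt j` taking `x₀` to the point with digits `j`. The last field is what the chart
is for: if `i ≤ j` digit by digit, then the group element `elt j * (elt i)⁻¹` taking the point `i`
to the point `j` sends everything lexicographically below `i` to something below `j`. -/
structure LexChart (P : Type*) {Ω : Type*} [Group P] [MulAction P Ω] (x₀ : Ω) (k p : ℕ) where
  elt : (Fin k → Fin p) → P
  smul_injective : Function.Injective fun j ↦ elt j • x₀
  exists_smul_eq (g : P) : ∃ j, elt j • x₀ = g • x₀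
  exists_lex_lt {i j z : Fin k → Fin p} : i ≤ j → toLex z < toLex i →
    ∃ z', toLex z' < toLex j ∧ elt z' • x₀ = (elt j * (elt i)⁻¹ * elt z) • x₀

theorem toLex_lt_toLex_iff_head_tail {α : Type*} [LT α] {k : ℕ} {a b : Fin (k + 1) → α} :
    toLex a < toLex b ↔
      a 0 < b 0 ∨ a 0 = b 0 ∧ toLex (Fin.tail a) < toLex (Fin.tail b) := by
  rw [← Fin.cons_self_tail a, ← Fin.cons_self_tail b]
  exact Fin.pi_lex_lt_cons_cons _

namespace LexChart

variable {P Ω : Type*} [Group P] [MulAction P Ω] {x₀ : Ω} {k p : ℕ}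

/-- The chart with no digits, for a one-point orbit. -/
def ofFixed (p : ℕ) (h : ∀ g : P, g • x₀ = x₀) : LexChart P x₀ 0 p where
  elt _ := 1
  smul_injective := Function.injective_of_subsingleton _
  exists_smul_eq g := ⟨Fin.elim0, by rw [one_smul, h]⟩
  exists_lex_lt _ hlt := absurd (congrArg toLex (Subsingleton.elim _ _)) hlt.ne

/-- The bijection between strings of digits and points of the orbit. -/
noncomputable def equivOrbit (c : LexChart P x₀ k p) :
    (Fin k → Fin p) ≃ MulAction.orbit P x₀ :=
  Equiv.ofBijective (fun j ↦ ⟨c.elt j • x₀, MulAction.mem_orbit _ _⟩)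
    ⟨fun _ _ h ↦ c.smul_injective (congrArg Subtype.val h), by
      rintro ⟨_, g, rfl⟩
      obtain ⟨j, hj⟩ := c.exists_smul_eq g
      exact ⟨j, Subtype.ext hj⟩⟩

theorem card_orbit (c : LexChart P x₀ k p) : Nat.card (MulAction.orbit P x₀) = p ^ k := by
  simp [← Nat.card_congr c.equivOrbit]

section Extend

variable {N : Subgroup P} [N.Normal] (c : LexChart N x₀ k p) (t : P)

/-- Prefixing a new leading digit, the exponent of a representative `t` of a generator of `P ⧸ N`,
to the digits of a chart for `N`. -/
def extendElt (j : Fin (k + 1) → Fin p) : P := t ^ (j 0 : ℕ) * c.elt (Fin.tail j)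

variable {t}

theorem mk_extendElt (j : Fin (k + 1) → Fin p) :
    (c.extendElt t j : P ⧸ N) = (t : P ⧸ N) ^ (j 0 : ℕ) := by
  simp [extendElt]

theorem exists_extendElt_cons_smul_eq {g : P} {e : Fin p}
    (h : (g : P ⧸ N) = (t : P ⧸ N) ^ (e : ℕ)) :
    ∃ z, c.extendElt t (Fin.cons e z) • x₀ = g • x₀ := by
  have hmem : (t ^ (e : ℕ))⁻¹ * g ∈ N := QuotientGroup.eq.1 (by simpa using h.symm)
  obtain ⟨z, hz⟩ := c.exists_smul_eq ⟨_, hmem⟩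
  refine ⟨z, ?_⟩
  rw [extendElt, mul_smul, Fin.cons_zero, Fin.tail_cons]
  exact (congrArg _ hz).trans (by rw [Subgroup.mk_smul, mul_smul, smul_inv_smul])

theorem extendElt_smul_injective (hN : MulAction.stabilizer P x₀ ≤ N)
    (ht : orderOf (t : P ⧸ N) = p) : Function.Injective fun j ↦ c.extendElt t j • x₀ := by
  intro i j (hij : c.extendElt t i • x₀ = c.extendElt t j • x₀)
  have hmk : (c.extendElt t i : P ⧸ N) = c.extendElt t j :=
    QuotientGroup.eq.2 (hN (by rw [MulAction.mem_stabilizer_iff, mul_smul, ← hij, inv_smul_smul]))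
  have head_eq : i 0 = j 0 := by
    rw [mk_extendElt, mk_extendElt] at hmk
    exact Fin.ext (pow_injOn_Iio_orderOf (by simp [ht]) (by simp [ht]) hmk)
  have tail_eq : Fin.tail i = Fin.tail j := by
    rw [extendElt, extendElt, head_eq, mul_smul, mul_smul] at hij
    exact c.smul_injective (smul_left_cancel _ hij)
  rw [← Fin.cons_self_tail i, ← Fin.cons_self_tail j, head_eq, tail_eq]

theorem exists_extendElt_lex_lt {i j z : Fin (k + 1) → Fin p} (hij : i ≤ j)
    (hzi : toLex z < toLex i) : ∃ z', toLex z' < toLex j ∧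
      c.extendElt t z' • x₀ = (c.extendElt t j * (c.extendElt t i)⁻¹ * c.extendElt t z) • x₀ := by
  rcases toLex_lt_toLex_iff_head_tail.1 hzi with hlt | ⟨heq, hlt⟩
  · have hij0 : (i 0 : ℕ) ≤ j 0 := hij 0
    have hzi0 : (z 0 : ℕ) < i 0 := hlt
    obtain ⟨d, hi⟩ : ∃ d, (i 0 : ℕ) = z 0 + d := Nat.exists_eq_add_of_le hzi0.le
    obtain ⟨e, hj⟩ : ∃ e, (j 0 : ℕ) = e + d := Nat.exists_eq_add_of_le' (by lia)
    have hej : e < j 0 := by lia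
    have hmk : ((c.extendElt t j * (c.extendElt t i)⁻¹ * c.extendElt t z : P) : P ⧸ N) =
        (t : P ⧸ N) ^ e := by
      simp only [QuotientGroup.mk_mul, QuotientGroup.mk_inv, mk_extendElt, hi, hj, pow_add]
      group
    obtain ⟨z', hz'⟩ := c.exists_extendElt_cons_smul_eq (e := ⟨e, hej.trans (j 0).2⟩) hmk
    exact ⟨_, toLex_lt_toLex_iff_head_tail.2 (Or.inl hej), hz'⟩
  · have tail_le : Fin.tail i ≤ Fin.tail j := fun l ↦ hij l.succ
    obtain ⟨z', hz', hsmul⟩ := c.exists_lex_lt tail_le hlt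
    refine ⟨Fin.cons (j 0) z', toLex_lt_toLex_iff_head_tail.2 (Or.inr ⟨rfl, hz'⟩), ?_⟩
    rw [extendElt, Fin.cons_zero, Fin.tail_cons, mul_smul]
    refine (congrArg _ hsmul).trans ?_
    rw [Subgroup.smul_def, ← mul_smul]
    congr 1
    simp only [extendElt, heq, Subgroup.coe_mul, Subgroup.coe_inv]
    group

/-- The chart for `P` with one more digit than a given chart for a normal subgroup `N` of index `p`
containing the stabilizer. -/
noncomputable def extend (hN : MulAction.stabilizer P x₀ ≤ N) [hp : Fact p.Prime]
    (hidx : N.index = p) (ht : t ∉ N) : LexChart P x₀ (k + 1) p where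
  elt := c.extendElt t
  smul_injective := c.extendElt_smul_injective hN (orderOf_mk_eq_of_index_eq_prime hidx ht)
  exists_smul_eq g := by
    classical
    have ht' := orderOf_mk_eq_of_index_eq_prime hidx ht
    have hfin : IsOfFinOrder (t : P ⧸ N) := orderOf_pos_iff.1 (ht' ▸ hp.out.pos)
    have hgen : (g : P ⧸ N) ∈ Subgroup.zpowers (t : P ⧸ N) :=
      mem_zpowers_of_prime_card (p := p) hidx (mt (QuotientGroup.eq_one_iff t).1 ht)
    obtain ⟨e, he, hg⟩ := Finset.mem_image.1 (hfin.mem_zpowers_iff_mem_range_orderOf.1 hgen)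
    rw [Finset.mem_range, ht'] at he
    obtain ⟨z, hz⟩ := c.exists_extendElt_cons_smul_eq (e := ⟨e, he⟩) hg.symm
    exact ⟨_, hz⟩
  exists_lex_lt := c.exists_extendElt_lex_lt

end Extend

end LexChart

theorem exists_lexChart {P Ω : Type*} [Group P] [Finite P] [MulAction P Ω] {p : ℕ}
    [hp : Fact p.Prime] (hP : IsPGroup p P) (x₀ : Ω) : ∃ k, Nonempty (LexChart P x₀ k p) := by
  by_cases hfix : MulAction.stabilizer P x₀ = ⊤
  · exact ⟨0, ⟨.ofFixed p fun g ↦ (hfix ▸ Subgroup.mem_top g : g ∈ MulAction.stabilizer P x₀)⟩⟩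
  · obtain ⟨N, hN, _, hidx⟩ := exists_normal_index_eq_of_isPGroup hP hfix
    have hNtop : N ≠ ⊤ := by
      rintro rfl
      exact hp.out.ne_one (hidx.symm.trans Subgroup.index_top)
    have : Nat.card N < Nat.card P := lt_of_le_of_ne (Subgroup.card_le_card_group N)
      (mt (Subgroup.card_eq_iff_eq_top N).1 hNtop)
    obtain ⟨t, ht⟩ := SetLike.exists_not_mem_of_ne_top N hNtop
    obtain ⟨k, ⟨c⟩⟩ := exists_lexChart (hP.to_subgroup N) x₀
    exact ⟨k + 1, ⟨c.extend hN hidx ht⟩⟩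
termination_by Nat.card P

/-! ### Ordered transversals -/

open Finset in
theorem card_antichain_sigma_mul_sqrt_le {ι : Type*} [Fintype ι] {k : ι → ℕ} {p v : ℕ}
    (hp : 2 ≤ p) (hk : ∀ i, v ≤ k i) {A : Finset (Σ i, Fin (k i) → Fin p)}
    (hA : IsAntichain (· ≤ ·) (A : Set (Σ i, Fin (k i) → Fin p))) :
    #A * √v ≤ √(2 / Real.pi) * Fintype.card (Σ i, Fin (k i) → Fin p) := by
  classical
  let fiber (i : ι) : Finset (Fin (k i) → Fin p) := {a | ⟨i, a⟩ ∈ A}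
  have card_eq : #A = ∑ i, #(fiber i) := by
    rw [← card_sigma]
    congr 1
    ext ⟨i, a⟩
    simp [fiber]
  have fiber_le (i : ι) : #(fiber i) * √v ≤ √(2 / Real.pi) * p ^ k i := by
    have antichain : IsAntichain (· ≤ ·) (fiber i : Set (Fin (k i) → Fin p)) := by
      intro a ha b hb hne hab
      refine hA (by simpa [fiber] using ha) (by simpa [fiber] using hb) ?_
        (Sigma.mk_le_mk_iff.2 hab)
      simpa using hne
    calc #(fiber i) * √v ≤ #(fiber i) * √(k i) := by gcongr; exact hk i
      _ ≤ √(2 / Real.pi) * p ^ k i := by simpa using card_antichain_mul_sqrt_le hp antichain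
  calc #A * √v = ∑ i, #(fiber i) * √v := by rw [card_eq, Nat.cast_sum, sum_mul]
    _ ≤ ∑ i, √(2 / Real.pi) * p ^ k i := sum_le_sum fun i _ ↦ fiber_le i
    _ = √(2 / Real.pi) * Fintype.card (Σ i, Fin (k i) → Fin p) := by simp [mul_sum]

/-- `y` dominates `x` with respect to a family `r` of group elements, thought of as a transversal
`r x • ω₀ = x`: not only is `x ≤ y`, but the group element `r y * (r x)⁻¹` taking `x` to `y` moves
everything below `x` below `y`. -/
def Dominates {G Ω : Type*} [Group G] [MulAction G Ω] [LinearOrder Ω] (r : Ω → G) (x y : Ω) :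
    Prop :=
  x ≤ y ∧ ∀ z < x, (r y * (r x)⁻¹) • z < y

namespace Dominates

variable {G Ω : Type*} [Group G] [MulAction G Ω] [LinearOrder Ω] {r : Ω → G}

instance : Std.Refl (Dominates r) :=
  ⟨fun _ ↦ ⟨le_rfl, fun z hz ↦ by rwa [mul_inv_cancel, one_smul]⟩⟩

instance : IsTrans Ω (Dominates r) :=
  ⟨fun x y z hxy hyz ↦ ⟨hxy.1.trans hyz.1, fun w hw ↦ by
    simpa only [← mul_smul, mul_assoc, inv_mul_cancel_left] using hyz.2 _ (hxy.2 w hw)⟩⟩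

instance : Std.Antisymm (Dominates r) :=
  ⟨fun _ _ hxy hyx ↦ hxy.1.antisymm hyx.1⟩

end Dominates

theorem exists_equiv_sigma_lexChart {P Ω : Type*} [Group P] [Finite P] [MulAction P Ω] {p : ℕ}
    [Fact p.Prime] (hP : IsPGroup p P) :
    ∃ (k : MulAction.orbitRel.Quotient P Ω → ℕ) (c : ∀ ω, LexChart P ω.out (k ω) p)
      (e : (Σ ω, Fin (k ω) → Fin p) ≃ Ω), ∀ ω a, e ⟨ω, a⟩ = (c ω).elt a • ω.out := by
  choose k c using fun ω : MulAction.orbitRel.Quotient P Ω ↦ exists_lexChart hP ω.out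
  exact ⟨k, fun ω ↦ (c ω).some, (Equiv.sigmaCongrRight fun ω ↦ (c ω).some.equivOrbit).trans
    (MulAction.selfEquivSigmaOrbits P Ω).symm, fun ω a ↦ rfl⟩

theorem exists_linearOrder_sigma_lex {Ω ι : Type*} [LinearOrder ι] {α : ι → Type*}
    [∀ i, LinearOrder (α i)] (e : (Σ i, α i) ≃ Ω) : ∃ _ : LinearOrder Ω,
      ∀ s t, e s < e t ↔ Sigma.Lex (· < ·) (fun _ ↦ (· < ·)) s t := by
  let _ : LinearOrder Ω := LinearOrder.lift' (fun x ↦ toLex (e.symm x))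
    (toLex.injective.comp e.symm.injective)
  refine ⟨inferInstance, fun s t ↦ ?_⟩
  change Sigma.Lex _ _ (e.symm (e s)) (e.symm (e t)) ↔ _
  rw [e.symm_apply_apply, e.symm_apply_apply]

theorem dominates_of_lexChart {G Ω ι : Type*} [Group G] [MulAction G Ω] [LinearOrder Ω]
    [LinearOrder ι] {P : Subgroup G} {k : ι → ℕ} {p : ℕ} {x₀ : ι → Ω}
    (c : ∀ i, LexChart P (x₀ i) (k i) p) {e : (Σ i, Fin (k i) → Fin p) ≃ Ω}
    (hlt : ∀ s t, e s < e t ↔ Sigma.Lex (· < ·) (fun _ a b ↦ toLex a < toLex b) s t)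
    (he : ∀ i a, e ⟨i, a⟩ = (c i).elt a • x₀ i) {r : Ω → G} {t : ι → G}
    (hr : ∀ i a, r (e ⟨i, a⟩) = (c i).elt a * t i) {s s' : Σ i, Fin (k i) → Fin p}
    (hs : s ≤ s') : Dominates r (e s) (e s') := by
  obtain ⟨i, a, b, hab⟩ := hs
  have hmove : r (e ⟨i, b⟩) * (r (e ⟨i, a⟩))⁻¹ = ((c i).elt b * ((c i).elt a)⁻¹ : P) := by
    rw [hr, hr, mul_inv_rev, mul_assoc, mul_inv_cancel_left, Subgroup.coe_mul, Subgroup.coe_inv]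
  refine ⟨?_, fun z hz ↦ ?_⟩
  · rcases (Pi.toLex_monotone hab).lt_or_eq with h | h
    · exact ((hlt _ _).2 (.right _ _ h)).le
    · rw [toLex.injective h]
  obtain ⟨⟨j, d⟩, rfl⟩ := e.surjective z
  rw [hmove, he, ← Subgroup.smul_def, ← mul_smul]
  rcases (hlt _ _).1 hz with ⟨_, _, hji⟩ | ⟨_, _, hd⟩
  · obtain ⟨d', hd'⟩ := (c j).exists_smul_eq ((c i).elt b * ((c i).elt a)⁻¹ * (c j).elt d)
    rw [← hd', ← he, hlt]
    exact .left _ _ hji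
  · obtain ⟨d', hdb, hd'⟩ := (c i).exists_lex_lt hab hd
    rw [← hd', ← he, hlt]
    exact .right _ _ hdb

theorem pow_factorization_card_dvd_card_orbit {G Ω : Type*} [Group G] [Finite G] [MulAction G Ω]
    [MulAction.IsPretransitive G Ω] {p : ℕ} [hp : Fact p.Prime] (P : Sylow p G) (x : Ω) :
    p ^ (Nat.card Ω).factorization p ∣ Nat.card (MulAction.orbit P x) := by
  have hdvd : Nat.card Ω ∣ Nat.card (MulAction.orbit P x) * (P : Subgroup G).index := by
    have horbit : Nat.card (MulAction.orbit P x) =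
        (MulAction.stabilizer G x ⊓ P).relIndex P := by
      rw [Subgroup.inf_relIndex_right]
      exact (MulAction.index_stabilizer P x).symm
    rw [horbit, Subgroup.relIndex_mul_index inf_le_right,
      ← MulAction.index_stabilizer_of_transitive G x]
    exact Subgroup.index_dvd_of_le inf_le_left
  have hcop : (p ^ (Nat.card Ω).factorization p).Coprime (P : Subgroup G).index :=
    Nat.Coprime.pow_left _ ((Nat.Prime.coprime_iff_not_dvd hp.out).2 P.not_dvd_index)
  exact hcop.dvd_of_dvd_mul_right ((Nat.ordProj_dvd _ p).trans hdvd)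

open Finset in
theorem exists_transversal_card_antichain_le_of_finite {G Ω : Type*} [Group G] [Finite G]
    [MulAction G Ω] [MulAction.IsPretransitive G Ω] [Finite Ω] (p : ℕ) [hp : Fact p.Prime]
    (ω₀ : Ω) :
    ∃ (_ : LinearOrder Ω) (r : Ω → G), (∀ x, r x • ω₀ = x) ∧
      ∀ A : Finset Ω, IsAntichain (Dominates r) (A : Set Ω) →
        #A * √((Nat.card Ω).factorization p) ≤ √(2 / Real.pi) * Nat.card Ω := by
  classical
  let P : Sylow p G := default
  obtain ⟨k, c, e, he⟩ := exists_equiv_sigma_lexChart (Ω := Ω) P.isPGroup'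
  have := Fintype.ofFinite (MulAction.orbitRel.Quotient P Ω)
  let _ : LinearOrder (MulAction.orbitRel.Quotient P Ω) :=
    IsWellOrder.linearOrder WellOrderingRel
  obtain ⟨_, hlt⟩ := exists_linearOrder_sigma_lex (α := fun ω ↦ Lex (Fin (k ω) → Fin p)) e
  choose t ht using fun ω : MulAction.orbitRel.Quotient P Ω ↦
    MulAction.exists_smul_eq G ω₀ ω.out
  obtain ⟨r, hr⟩ : ∃ r : Ω → G, ∀ ω a, r (e ⟨ω, a⟩) = (c ω).elt a * t ω := by
    let ρ (s : Σ ω, Fin (k ω) → Fin p) : G := (c s.1).elt s.2 * t s.1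
    exact ⟨ρ ∘ e.symm, fun ω a ↦ congrArg ρ (e.symm_apply_apply _)⟩
  refine ⟨inferInstance, r, fun x ↦ ?_, fun A hA ↦ ?_⟩
  · obtain ⟨⟨ω, a⟩, rfl⟩ := e.surjective x
    rw [hr, mul_smul, ht, he, Subgroup.smul_def]
  · have le_k (ω) : (Nat.card Ω).factorization p ≤ k ω :=
      (Nat.pow_dvd_pow_iff_le_right hp.out.one_lt).1
        ((c ω).card_orbit ▸ pow_factorization_card_dvd_card_orbit P ω.out)
    have antichain : IsAntichain (· ≤ ·)
        ((A.map e.symm.toEmbedding : Finset _) : Set (Σ ω, Fin (k ω) → Fin p)) := by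
      rw [coe_map]
      refine hA.image e.symm fun x y hxy ↦ ?_
      simpa only [e.apply_symm_apply] using dominates_of_lexChart c hlt he hr hxy
    have := card_antichain_sigma_mul_sqrt_le hp.out.two_le le_k antichain
    rwa [card_map, ← Nat.card_eq_fintype_card, Nat.card_congr e] at this

theorem exists_transversal_card_antichain_le {G Ω : Type*} [Group G] [MulAction G Ω]
    [MulAction.IsPretransitive G Ω] [Finite Ω] (p : ℕ) [Fact p.Prime] (ω₀ : Ω) :
    ∃ (_ : LinearOrder Ω) (r : Ω → G), (∀ x, r x • ω₀ = x) ∧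
      ∀ A : Finset Ω, IsAntichain (Dominates r) (A : Set Ω) →
        A.card * √((Nat.card Ω).factorization p) ≤ √(2 / Real.pi) * Nat.card Ω := by
  let Γ := (MulAction.toPermHom G Ω).range
  have : MulAction.IsPretransitive Γ Ω := ⟨fun x y ↦ by
    obtain ⟨g, hg⟩ := MulAction.exists_smul_eq G x y
    exact ⟨⟨_, g, rfl⟩, hg⟩⟩
  obtain ⟨_, r, hr, hA⟩ := exists_transversal_card_antichain_le_of_finite (G := Γ) p ω₀
  choose lift hlift using fun x ↦ (r x).2
  have smul_eq (g : G) (x : Ω) : MulAction.toPermHom G Ω g x = g • x := rfl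
  refine ⟨inferInstance, lift, fun x ↦ ?_, ?_⟩
  · conv_rhs => rw [← hr x]
    rw [← smul_eq, hlift, Subgroup.smul_def, Equiv.Perm.smul_def]
  · have : Dominates lift = Dominates r := by
      ext x y
      have (z : Ω) : (lift y * (lift x)⁻¹) • z = (r y * (r x)⁻¹) • z := by
        rw [← smul_eq, map_mul, map_inv, hlift, hlift]
        rfl
      simp only [Dominates, this]
    rwa [this]

/-! ### Leading terms -/

section LeadingTerms

open scoped Pointwise

variable {G R W : Type*} [Group G] [Ring R] [AddCommGroup W] [Module R W] [DistribMulAction G W]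
  [SMulCommClass G R W]

theorem smul_eq_self_of_forall_smul_mem {V : Submodule R W} {g : G} (hg : ∀ v ∈ V, g • v ∈ V)
    (hg' : ∀ v ∈ V, g⁻¹ • v ∈ V) : g • V = V := by
  refine le_antisymm ?_ fun v hv ↦ ?_
  · rintro _ ⟨v, hv, rfl⟩
    exact hg v hv
  · exact ⟨g⁻¹ • v, hg' v hv, smul_inv_smul g v⟩

variable {Ω : Type*} [LinearOrder Ω] {φ : Ω → Submodule R W} {r : Ω → G} {S : Submodule R W}

/-- The vectors `u` for which some element of `S` has leading term `r x • u`, that is, agrees with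
`r x • u` up to a combination of vectors in the components `φ z` with `z < x`. -/
def leadingCoeffs (φ : Ω → Submodule R W) (r : Ω → G) (S : Submodule R W) (x : Ω) :
    Submodule R W :=
  (S ⊔ ⨆ z < x, φ z).comap (DistribSMul.toLinearMap R W (r x))

theorem mem_leadingCoeffs {x : Ω} {u : W} :
    u ∈ leadingCoeffs φ r S x ↔ r x • u ∈ S ⊔ ⨆ z < x, φ z := Iff.rfl

variable [MulAction G Ω]

theorem smul_mem_sup_iSup_lt (hφ : ∀ (g : G) z, g • φ z = φ (g • z))
    (hS : ∀ g : G, ∀ w ∈ S, g • w ∈ S) {g : G} {x y : Ω} (hxy : ∀ z < x, g • z < y) {w : W}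
    (hw : w ∈ S ⊔ ⨆ z < x, φ z) : g • w ∈ S ⊔ ⨆ z < y, φ z := by
  have hle : g • (S ⊔ ⨆ z < x, φ z) ≤ S ⊔ ⨆ z < y, φ z := by
    simp only [Submodule.smul_sup', Submodule.smul_iSup', hφ]
    exact sup_le_sup (by rintro _ ⟨s, hs, rfl⟩; exact hS g s hs)
      (iSup₂_le fun z hz ↦ le_iSup₂_of_le _ (hxy z hz) le_rfl)
  exact hle (Submodule.smul_mem_pointwise_smul _ _ _ hw)

theorem Dominates.leadingCoeffs_le (hφ : ∀ (g : G) z, g • φ z = φ (g • z))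
    (hS : ∀ g : G, ∀ w ∈ S, g • w ∈ S) {x y : Ω} (hxy : Dominates r x y) :
    leadingCoeffs φ r S x ≤ leadingCoeffs φ r S y := fun u hu ↦ by
  rw [mem_leadingCoeffs] at hu ⊢
  simpa only [mul_smul, inv_smul_smul] using smul_mem_sup_iSup_lt hφ hS hxy.2 hu

theorem smul_mem_leadingCoeffs (hφ : ∀ (g : G) z, g • φ z = φ (g • z))
    (hS : ∀ g : G, ∀ w ∈ S, g • w ∈ S) {k : G} (hk : k ∈ (MulAction.toPermHom G Ω).ker) {x : Ω}
    {u : W} (hu : u ∈ leadingCoeffs φ r S x) : k • u ∈ leadingCoeffs φ r S x := by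
  have hconj : r x * k * (r x)⁻¹ ∈ (MulAction.toPermHom G Ω).ker :=
    (MonoidHom.normal_ker _).conj_mem k hk (r x)
  have hfix : ∀ z < x, (r x * k * (r x)⁻¹) • z < x := fun z hz ↦
    (Equiv.congr_fun (MonoidHom.mem_ker.1 hconj) z : (r x * k * (r x)⁻¹) • z = z).trans_lt hz
  rw [mem_leadingCoeffs] at hu ⊢
  simpa only [mul_smul, inv_smul_smul] using smul_mem_sup_iSup_lt hφ hS hfix hu

variable [Finite Ω] {m : ℕ}

theorem exists_finset_forall_mem_leadingCoeffs (hφ : ∀ (g : G) z, g • φ z = φ (g • z))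
    (hm : ∀ A : Finset Ω, IsAntichain (Dominates r) (A : Set Ω) → A.card ≤ m)
    (S : Submodule R W) (u : W) : ∃ B : Finset W, (B : Set W) ⊆ S ∧ B.card ≤ m ∧
      ∀ T : Submodule R W, (∀ g : G, ∀ w ∈ T, g • w ∈ T) → (B : Set W) ⊆ T →
        ∀ x, u ∈ leadingCoeffs φ r S x → u ∈ leadingCoeffs φ r T x := by
  classical
  obtain ⟨A, hA, antichain, dominated⟩ :=
    exists_antichain_forall_rel (Dominates r) {x | u ∈ leadingCoeffs φ r S x}
  choose! w hwS b hb hwb using fun x (hx : u ∈ leadingCoeffs φ r S x) ↦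
    Submodule.mem_sup.1 (mem_leadingCoeffs.1 hx)
  refine ⟨A.image w, ?_, Finset.card_image_le.trans (hm A antichain), fun T hT hBT x hx ↦ ?_⟩
  · rw [Finset.coe_image]
    rintro _ ⟨y, hy, rfl⟩
    exact hwS y (hA hy)
  · obtain ⟨y, hy, hyx⟩ := dominated x hx
    refine hyx.leadingCoeffs_le hφ hT (mem_leadingCoeffs.2 ?_)
    rw [← hwb y (hA hy)]
    exact Submodule.add_mem_sup (hBT (Finset.mem_image_of_mem w hy)) (hb y (hA hy))

end LeadingTerms

/-! ### Numbers of generators -/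

section Generators

open scoped Pointwise

variable {G F W : Type*} [Group G] [Field F] [AddCommGroup W] [Module F W] [DistribMulAction G W]
  [SMulCommClass G F W] {S : Submodule F W}

theorem dMod_le_card (hS : ∀ g : G, ∀ w ∈ S, g • w ∈ S) {B : Finset W} (hB : (B : Set W) ⊆ S)
    (hgen : ∀ T ≤ S, (∀ g : G, ∀ w ∈ T, g • w ∈ T) → (B : Set W) ⊆ T → S ≤ T) :
    dMod G S ≤ B.card := by
  let X : Set W := {w | ∃ g : G, ∃ b ∈ B, w = g • b}
  have smul_mem_span (g : G) : ∀ w ∈ Submodule.span F X, g • w ∈ Submodule.span F X := by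
    suffices Submodule.span F X ≤ (Submodule.span F X).comap (DistribSMul.toLinearMap F W g) from
      fun w hw ↦ this hw
    rw [Submodule.span_le]
    rintro _ ⟨h, b, hb, rfl⟩
    exact Submodule.subset_span ⟨g * h, b, hb, smul_smul g h b⟩
  have span_le : Submodule.span F X ≤ S := by
    refine Submodule.span_le.2 ?_
    rintro _ ⟨g, b, hb, rfl⟩
    exact hS g b (hB hb)
  have subset_span : (B : Set W) ⊆ Submodule.span F X := fun b hb ↦
    Submodule.subset_span ⟨1, b, hb, (one_smul G b).symm⟩
  exact Nat.sInf_le ⟨B, rfl, hB, span_le.antisymm (hgen _ span_le smul_mem_span subset_span)⟩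

theorem dMod_le_card_mul_of_antichain {Ω : Type*} [LinearOrder Ω] [Finite Ω] [MulAction G Ω]
    {φ : Ω → Submodule F W} {r : Ω → G} {m : ℕ} (hφ : ∀ (g : G) z, g • φ z = φ (g • z))
    (hm : ∀ A : Finset Ω, IsAntichain (Dominates r) (A : Set Ω) → A.card ≤ m)
    {ω₀ : Ω} (hr : ∀ x, r x • ω₀ = x) {U : Finset W}
    (hU : ∀ v ∈ φ ω₀, v ≠ 0 → ∃ u ∈ U, v ∈ MulAction.orbit (MulAction.toPermHom G Ω).ker u)
    (hS : ∀ g : G, ∀ w ∈ S, g • w ∈ S) (hSφ : S ≤ iSup φ) : dMod G S ≤ U.card * m := by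
  classical
  choose B hBS hBm hB using exists_finset_forall_mem_leadingCoeffs hφ hm S
  have union_subset : (U.biUnion B : Set W) ⊆ S := by simpa using fun u _ ↦ hBS u
  refine (dMod_le_card hS union_subset fun T hTS hT hBT ↦ ?_).trans
    (Finset.card_biUnion_le_card_mul _ _ _ fun u _ ↦ hBm u)
  have leadingCoeffs_le : ∀ x, ∀ v ∈ φ ω₀,
      v ∈ leadingCoeffs φ r S x → v ∈ leadingCoeffs φ r T x := by
    intro x v hv hvS
    rcases eq_or_ne v 0 with rfl | hv0
    · exact zero_mem _
    obtain ⟨u, hu, k, rfl⟩ := hU v hv hv0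
    have hBuT : (B u : Set W) ⊆ T :=
      (Finset.coe_subset.2 (Finset.subset_biUnion_of_mem B hu)).trans hBT
    have huS : u ∈ leadingCoeffs φ r S x := by
      simpa only [Subgroup.smul_def, inv_smul_smul] using
        smul_mem_leadingCoeffs hφ hS (inv_mem k.2) hvS
    exact smul_mem_leadingCoeffs hφ hT k.2 (hB u T hT hBuT x huS)
  refine le_of_inf_sup_iSup_lt_le hTS hSφ fun x w hw ↦ ?_
  obtain ⟨hwφ, hwS⟩ := Submodule.mem_inf.1 hw
  rw [← hr x, ← hφ] at hwφ
  obtain ⟨v, hv, rfl⟩ := hwφ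
  exact leadingCoeffs_le x v hv hwS

theorem dMod_le_card_mul_floor {Ω : Type*} [MulAction G Ω] [MulAction.IsPretransitive G Ω]
    [Finite Ω] {φ : Ω → Submodule F W} {p : ℕ} [Fact p.Prime]
    (hφ : ∀ (g : G) z, g • φ z = φ (g • z)) (hp : p ∣ Nat.card Ω) {ω₀ : Ω} {U : Finset W}
    (hU : ∀ v ∈ φ ω₀, v ≠ 0 → ∃ u ∈ U, v ∈ MulAction.orbit (MulAction.toPermHom G Ω).ker u)
    (hS : ∀ g : G, ∀ w ∈ S, g • w ∈ S) (hSφ : S ≤ iSup φ) :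
    dMod G S ≤ U.card *
      ⌊√(2 / Real.pi) * Nat.card Ω / √((Nat.card Ω).factorization p)⌋₊ := by
  obtain ⟨_, r, hr, hA⟩ := exists_transversal_card_antichain_le (G := G) p ω₀
  refine dMod_le_card_mul_of_antichain hφ (fun A antichain ↦ Nat.le_floor ?_) hr hU hS hSφ
  have : Nonempty Ω := ⟨ω₀⟩
  have hpos : 0 < (Nat.card Ω).factorization p :=
    (Fact.out : p.Prime).factorization_pos_of_dvd Nat.card_pos.ne' hp
  rw [le_div_iff₀ (by positivity)]
  exact hA A antichain

theorem exists_finset_forall_mem_orbit {K X : Type*} [Group K] [MulAction K X] {s : Set X}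
    (hfin : (MulAction.orbit K '' s).Finite) : ∃ R : Finset X,
      R.card = (MulAction.orbit K '' s).ncard ∧ ∀ v ∈ s, ∃ u ∈ R, v ∈ MulAction.orbit K u := by
  obtain ⟨R, -, hR⟩ := (Set.surjOn_image (MulAction.orbit K) s).exists_bijOn_subset
  have hRfin : R.Finite := hR.finite_iff_finite.2 hfin
  refine ⟨hRfin.toFinset, ?_, fun v hv ↦ ?_⟩
  · rw [← Set.ncard_eq_toFinset_card R hRfin, ← hR.image_eq, hR.injOn.ncard_image]
  · obtain ⟨u, hu, huv⟩ := hR.surjOn (Set.mem_image_of_mem _ hv)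
    exact ⟨u, hRfin.mem_toFinset.2 hu, huv ▸ MulAction.mem_orbit_self v⟩

theorem orbit_subgroup_eq_setOf_exists_mem {G X : Type*} [Group G] [MulAction G X]
    (K : Subgroup G) (x : X) : MulAction.orbit K x = {y | ∃ g ∈ K, g • x = y} := by
  ext
  simp [MulAction.mem_orbit_iff, Subgroup.smul_def]

theorem stmt_14_general {H : Subgroup G} [H.FiniteIndex] {p : ℕ} [Fact p.Prime]
    {V : Submodule F W} (hV : ∀ g ∈ H, ∀ v ∈ V, g • v ∈ V)
    (hfin : (MulAction.orbit H.normalCore '' (V \ {0} : Set W)).Finite)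
    (hnp : 1 < p ^ H.index.factorization p)
    (hS : ∀ g : G, ∀ w ∈ S, g • w ∈ S) (hSV : S ≤ ⨆ g : G, g • V) :
    dMod G S ≤ (MulAction.orbit H.normalCore '' (V \ {0} : Set W)).ncard *
      ⌊√(2 / Real.pi) * H.index / √(Real.logb p (p ^ H.index.factorization p))⌋₊ := by
  have hp : p ∣ H.index := Nat.dvd_of_factorization_pos fun h ↦ by simp [h] at hnp
  have hlogb : Real.logb p (p ^ H.index.factorization p) = H.index.factorization p := by
    have : (1 : ℝ) < p := by exact_mod_cast (Fact.out : p.Prime).one_lt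
    rw [Real.logb_pow, Real.logb_self_eq_one this, mul_one]
  have hle : H ≤ MulAction.stabilizer G V := fun g hg ↦
    smul_eq_self_of_forall_smul_mem (hV g hg) (hV _ (inv_mem hg))
  let φ (q : G ⧸ H) : Submodule F W :=
    MulAction.ofQuotientStabilizer G V (Subgroup.quotientMapOfLE hle q)
  have hφ (g : G) (q : G ⧸ H) : g • φ q = φ (g • q) := by
    induction q using QuotientGroup.induction_on with
    | H h => exact smul_smul g h V
  have hSφ : S ≤ iSup φ := by
    rwa [← QuotientGroup.mk_surjective.iSup_comp]
  obtain ⟨R, hRcard, hR⟩ := exists_finset_forall_mem_orbit hfin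
  rw [hlogb, ← hRcard]
  refine dMod_le_card_mul_floor (ω₀ := ((1 : G) : G ⧸ H)) hφ hp (fun v hv hv0 ↦ ?_) hS hSφ
  rw [← Subgroup.normalCore_eq_ker]
  exact hR v ⟨by simpa [φ] using hv, hv0⟩

end Generators

/-- Let `G` be a finite group, `H ≤ G` of index `n ≥ 2`, `F` a field of characteristic
`p > 0`, and `V` an `H`-module of finite dimension over `F`.  The induced module `V↑G` is
presented internally: `W` is a `G`-module containing an `H`-stable subspace `V` such that `W`
is the direct sum of the translates `g • V` over the cosets `g H ∈ G ⧸ H`.  Let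
`K = core_G H`, and let `χ` be the number of orbits of `K` on the nonzero elements of `V`
(assumed finite).  If `K` is soluble and `n_p > 1`, then for every (`G`-stable) submodule `S`
of `W`, `d_G(S) ≤ χ·⌊b·n/√(log_p n_p)⌋`, where `b = √(2/π)`. -/
theorem stmt_14 (G : Type*) [Group G] [Fintype G]
    (H : Subgroup G) (n : ℕ) (hn : 2 ≤ n) (hidx : H.index = n)
    (F W : Type*) [Field F] (p : ℕ) [Fact p.Prime] (hchar : CharP F p)
    [AddCommGroup W] [Module F W] [DistribMulAction G W] [SMulCommClass G F W]
    (V : Submodule F W) [FiniteDimensional F V]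
    (hVstable : ∀ g ∈ H, ∀ v ∈ V, g • v ∈ V)
    (hinduced : ∃ φ : G ⧸ H → Submodule F W,
      (∀ g : G, φ (g : G ⧸ H) = V.map (DistribMulAction.toLinearMap F W g)) ∧
        iSupIndep φ ∧ iSup φ = ⊤)
    (orbs : Set (Set W))
    (horbs : orbs = {s : Set W | ∃ v ∈ (V : Set W), v ≠ 0 ∧
      s = {w : W | ∃ g ∈ H.normalCore, g • v = w}})
    (hfin : orbs.Finite)
    (χ : ℕ) (hχ : χ = Nat.card orbs)
    (hKsol : IsSolvable H.normalCore)
    (hnp : 1 < p ^ n.factorization p)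
    (S : Submodule F W) (hSstable : ∀ g : G, ∀ w ∈ S, g • w ∈ S) :
    dMod G S ≤
      χ * ⌊Real.sqrt (2 / Real.pi) * n /
        Real.sqrt (Real.logb p (p ^ n.factorization p))⌋₊ := by
  obtain ⟨φ, hφ, -, htop⟩ := hinduced
  have hSV : S ≤ ⨆ g : G, φ g := by
    rw [QuotientGroup.mk_surjective.iSup_comp, htop]
    exact le_top
  have horbs_eq : orbs = MulAction.orbit H.normalCore '' (V \ {0} : Set W) := by
    ext s
    simp [horbs, orbit_subgroup_eq_setOf_exists_mem, and_assoc, eq_comm]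
  rw [iSup_congr hφ] at hSV
  subst hidx hχ horbs_eq
  exact stmt_14_general hVstable hfin hnp hSstable hSV
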